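/- arXiv:1206.1657 — 3 statements merged into one kernel-verified Lean document; each statement's English description precedes it below -/
import Mathlib

section
/- Let p(x) = a_m x^m + ⋯ + a_1 x + a_0 be a nonzero algebraic polynomial with complex coefficients and let ε > 0. Then the function f(x) = p(x) e^{−|x|^{1+ε}} has linearly independent time-frequency translates, i.e., the Gabor system 𝒢(f, ℝ²) is linearly independent. -/
/-!
Write `f(x) = p(x) e^{-|x|^{1+ε}}`. Because the exponent `1 + ε` exceeds `1`, translating `f`
further to the right makes it larger near `+∞` by an unbounded factor: if `b < β` then
`f(x - b) = o(f(x - β))` as `x → +∞`. Indeed, with `u = x - β` and `d = β - b > 0`,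
`(u + d)^{1+ε} ≥ (u + d) u^ε = u^{1+ε} + d u^ε`, and the polynomial factors are of the same order
(`isLittleO_translate`).

Suppose a linear dependence holds almost everywhere, hence everywhere by continuity, and keep only
the points with nonzero coefficient. Let `β` be the largest translation parameter that occurs.
The terms with a smaller translation are `o(f(x - β))`, so dividing by `f(x - β)` shows that the
trigonometric polynomial carried by the terms with translation `β` tends to `0` at `+∞`. A
trigonometric polynomial with distinct frequencies that tends to `0` has only zero coefficients
(`coeff_eq_zero_of_tendsto_zero`), a contradiction.
-/

open MeasureTheory

/-- The Gabor system `𝒢(f, Λ)` is linearly independent. -/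
def GaborIndependent (f : ℝ → ℂ) (Λ : Set (ℝ × ℝ)) : Prop :=
  ∀ s : Finset (ℝ × ℝ), (s : Set (ℝ × ℝ)) ⊆ Λ →
    ∀ c : ℝ × ℝ → ℂ,
      (∀ᵐ x : ℝ ∂volume,
        ∑ p ∈ s, c p * Complex.exp (2 * ↑Real.pi * Complex.I * ↑p.1 * ↑x) * f (x - p.2) = 0) →
      ∀ p ∈ s, c p = 0

open Filter Topology Asymptotics

/-- The character `x ↦ e^{2πiax}`, in the form in which it occurs in `GaborIndependent`. -/
noncomputable def character (a x : ℝ) : ℂ :=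
  Complex.exp (2 * ↑Real.pi * Complex.I * ↑a * ↑x)

lemma norm_character (a x : ℝ) : ‖character a x‖ = 1 := by
  have h : 2 * (Real.pi : ℂ) * Complex.I * a * x
      = ((2 * Real.pi * a * x : ℝ) : ℂ) * Complex.I := by
    push_cast; ring
  rw [character, h, Complex.norm_exp_ofReal_mul_I]

lemma character_add (a x h : ℝ) : character a (x + h) = character a x * character a h := by
  simp only [character]
  rw [← Complex.exp_add]
  congr 1
  push_cast
  ring

lemma exists_character_ne {a b : ℝ} (hab : a ≠ b) : ∃ h : ℝ, character a h ≠ character b h := by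
  -- the half period of the difference frequency, where the quotient of the characters is `-1`
  refine ⟨1 / (2 * (a - b)), fun h => ?_⟩
  have hsub : ((a : ℂ) - b) ≠ 0 := by
    exact_mod_cast sub_ne_zero.mpr hab
  have h2 : character a (1 / (2 * (a - b))) = - character b (1 / (2 * (a - b))) := by
    have : 2 * (Real.pi : ℂ) * Complex.I * a * ((1 / (2 * (a - b)) : ℝ) : ℂ)
        = 2 * (Real.pi : ℂ) * Complex.I * b * ((1 / (2 * (a - b)) : ℝ) : ℂ)
          + Real.pi * Complex.I := by
      push_cast
      field_simp
      ring
    rw [character, this, Complex.exp_add, Complex.exp_pi_mul_I, character]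
    ring
  have h0 : character b (1 / (2 * (a - b))) = 0 := by
    rw [h] at h2
    exact self_eq_neg.mp h2
  have h1 := norm_character b (1 / (2 * (a - b)))
  rw [h0, norm_zero] at h1
  exact zero_ne_one h1

/-- A trigonometric polynomial with distinct frequencies that tends to `0` at `+∞` has only
zero coefficients. The induction removes the frequency `a i₀` by passing from `Q` to
`Q(x + h) - e^{2πi a(i₀) h} Q(x)`, which still tends to `0`. -/
lemma coeff_eq_zero_of_tendsto_zero {ι : Type*} (a : ι → ℝ) (s : Finset ι) :
    Set.InjOn a s → ∀ c : ι → ℂ,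
      Tendsto (fun x : ℝ => ∑ i ∈ s, c i * character (a i) x) atTop (𝓝 0) →
      ∀ i ∈ s, c i = 0 := by
  classical
  induction s using Finset.induction_on with
  | empty => simp
  | insert i₀ s hi₀ ih =>
    intro hinj c hc
    have hrest : ∀ i ∈ s, c i = 0 := by
      intro i hi
      have hne : a i ≠ a i₀ := fun h => hi₀ <| by
        have := hinj (by simp [hi]) (by simp) h
        exact this ▸ hi
      obtain ⟨h, hh⟩ := exists_character_ne hne
      have hlim := ((hc.comp (tendsto_atTop_add_const_right atTop h tendsto_id)).sub
        (hc.const_mul (character (a i₀) h)))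
      have key := ih (hinj.mono (by simp)) (fun j => c j * (character (a j) h - character (a i₀) h))
        (by
          simp only [mul_zero, sub_zero] at hlim
          refine hlim.congr fun x => ?_
          simp only [Function.comp_apply, id, Finset.sum_insert hi₀, character_add, mul_add,
            Finset.mul_sum]
          rw [add_sub_add_comm, ← Finset.sum_sub_distrib]
          rw [show c i₀ * (character (a i₀) x * character (a i₀) h)
            - character (a i₀) h * (c i₀ * character (a i₀) x) = 0 by ring, zero_add]
          exact Finset.sum_congr rfl fun j _ => by ring) i hi
      exact (mul_eq_zero.mp key).resolve_right (sub_ne_zero.mpr hh)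
    have hi₀' : c i₀ = 0 := by
      have hn : Tendsto (fun _ : ℝ => ‖c i₀‖) atTop (𝓝 0) := by
        refine (tendsto_zero_iff_norm_tendsto_zero.mp hc).congr fun x => ?_
        rw [Finset.sum_insert hi₀, Finset.sum_eq_zero (fun i hi => by rw [hrest i hi, zero_mul]),
          add_zero, norm_mul, norm_character, mul_one]
      exact norm_eq_zero.mp (tendsto_nhds_unique tendsto_const_nhds hn)
    intro i hi
    rcases Finset.mem_insert.mp hi with rfl | hi
    · exact hi₀'
    · exact hrest i hi

lemma tendsto_ofReal_sub_cobounded (b : ℝ) :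
    Tendsto (fun x : ℝ => ((x - b : ℝ) : ℂ)) atTop (Bornology.cobounded ℂ) := by
  rw [← tendsto_norm_atTop_iff_cobounded]
  simp only [Complex.norm_real, Real.norm_eq_abs]
  exact tendsto_abs_atTop_atTop.comp (tendsto_atTop_add_const_right atTop (-b) tendsto_id)

lemma isBigO_polynomial_translate (p : Polynomial ℂ) (b β : ℝ) :
    (fun x : ℝ => p.eval ((x - b : ℝ) : ℂ)) =O[atTop]
      (fun x : ℝ => p.eval ((x - β : ℝ) : ℂ)) := by
  have h := (Polynomial.isBigO_cobounded_of_degree_le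
    (P := Polynomial.taylor ((β - b : ℝ) : ℂ) p) (Q := p)
    (Polynomial.degree_taylor p _).le).comp_tendsto (tendsto_ofReal_sub_cobounded β)
  refine h.congr_left fun x => ?_
  simp only [Function.comp_apply, Polynomial.taylor_eval]
  congr 1
  push_cast
  ring

lemma isLittleO_exp_translate {ε : ℝ} (hε : 0 < ε) {b β : ℝ} (hb : b < β) :
    (fun x : ℝ => Real.exp (-(|x - b| ^ (1 + ε)))) =o[atTop]
      (fun x : ℝ => Real.exp (-(|x - β| ^ (1 + ε)))) := by
  rw [Real.isLittleO_exp_comp_exp_comp]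
  have hu : Tendsto (fun x : ℝ => x - β) atTop atTop :=
    tendsto_atTop_add_const_right atTop (-β) tendsto_id
  have hd : Tendsto (fun x : ℝ => (β - b) * (x - β) ^ ε) atTop atTop :=
    ((tendsto_rpow_atTop hε).comp hu).const_mul_atTop (sub_pos.mpr hb)
  refine tendsto_atTop_mono' _ ?_ hd
  filter_upwards [eventually_gt_atTop β] with x hx
  have hu0 : 0 < x - β := sub_pos.mpr hx
  have hle : x - β ≤ x - b := by linarith
  have hv0 : 0 < x - b := hu0.trans_le hle
  rw [abs_of_pos hu0, abs_of_pos hv0, Real.rpow_add hu0, Real.rpow_add hv0, Real.rpow_one,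
    Real.rpow_one]
  have h1 : (x - β) ^ ε ≤ (x - b) ^ ε := Real.rpow_le_rpow hu0.le hle hε.le
  nlinarith [mul_le_mul_of_nonneg_left h1 hv0.le]

/-- Near `+∞`, a translate of `p(x) e^{-|x|^{1+ε}}` is negligible against any translate further to
the right. -/
lemma isLittleO_translate (p : Polynomial ℂ) {ε : ℝ} (hε : 0 < ε) {b β : ℝ} (hb : b < β) :
    (fun x : ℝ => p.eval ((x - b : ℝ) : ℂ) * ((Real.exp (-(|x - b| ^ (1 + ε))) : ℝ) : ℂ))
      =o[atTop]
    (fun x : ℝ => p.eval ((x - β : ℝ) : ℂ) * ((Real.exp (-(|x - β| ^ (1 + ε))) : ℝ) : ℂ)) := by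
  refine (isBigO_polynomial_translate p b β).mul_isLittleO ?_
  have h := isLittleO_exp_translate hε hb
  refine IsLittleO.of_norm_norm ?_
  simp only [Complex.norm_real]
  exact h.norm_norm

/-- The form of the independence argument that depends on `f` only through its behaviour at
`+∞`. -/
lemma gaborIndependent_of_isLittleO {f : ℝ → ℂ} (hf : Continuous f)
    (hne : ∀ β : ℝ, ∀ᶠ x in atTop, f (x - β) ≠ 0)
    (hlit : ∀ b β : ℝ, b < β → (fun x => f (x - b)) =o[atTop] (fun x => f (x - β))) :
    GaborIndependent f Set.univ := by
  classical
  intro s _ c hae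
  have hev : ∀ x : ℝ, ∑ q ∈ s, c q * character q.1 x * f (x - q.2) = 0 := by
    have hcont : Continuous fun x : ℝ => ∑ q ∈ s, c q * character q.1 x * f (x - q.2) := by
      unfold character
      fun_prop
    exact congrFun (hcont.ae_eq_iff_eq volume continuous_const |>.mp hae)
  by_contra hcon
  push Not at hcon
  obtain ⟨q₀, hq₀, hcq₀⟩ := hcon
  -- `q₁` has the largest translation parameter among the points with nonzero coefficient
  obtain ⟨q₁, hq₁, hmax⟩ := (s.filter fun q => c q ≠ 0).exists_max_image Prod.snd
    ⟨q₀, by simp [hq₀, hcq₀]⟩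
  obtain ⟨hq₁s, hcq₁⟩ := Finset.mem_filter.mp hq₁
  have hsmall : (fun x => ∑ q ∈ s with q.2 ≠ q₁.2, c q * character q.1 x * f (x - q.2))
      =o[atTop] fun x => f (x - q₁.2) := by
    refine IsLittleO.fun_sum fun q hq => ?_
    obtain ⟨hqs, hq2⟩ := Finset.mem_filter.mp hq
    by_cases hcq : c q = 0
    · simp [hcq]
    have hlt : q.2 < q₁.2 := lt_of_le_of_ne (hmax q (by simp [hqs, hcq])) hq2
    have hbd : (fun x => c q * character q.1 x) =O[atTop] fun _ => (1 : ℂ) :=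
      IsBigO.of_bound ‖c q‖ (Eventually.of_forall fun x => by simp [norm_character])
    simpa using hbd.mul_isLittleO (hlit _ _ hlt)
  have hQ : Tendsto (fun x => ∑ q ∈ s with q.2 = q₁.2, c q * character q.1 x) atTop (𝓝 0) := by
    have h0 := (hsmall.tendsto_div_nhds_zero).neg
    rw [neg_zero] at h0
    refine h0.congr' ?_
    filter_upwards [hne q₁.2] with x hx
    have hx0 := hev x
    rw [← Finset.sum_filter_add_sum_filter_not s (fun q => q.2 = q₁.2)] at hx0
    have hmain : ∑ q ∈ s with q.2 = q₁.2, c q * character q.1 x * f (x - q.2)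
        = (∑ q ∈ s with q.2 = q₁.2, c q * character q.1 x) * f (x - q₁.2) := by
      rw [Finset.sum_mul]
      exact Finset.sum_congr rfl fun q hq => by rw [(Finset.mem_filter.mp hq).2]
    rw [hmain] at hx0
    rw [← neg_div, div_eq_iff hx]
    exact (eq_neg_of_add_eq_zero_left hx0).symm
  refine hcq₁ (coeff_eq_zero_of_tendsto_zero Prod.fst _ ?_ c hQ q₁ (by simp [hq₁s]))
  intro q hq r hr hqr
  simp only [Finset.coe_filter, Set.mem_ofPred_eq] at hq hr
  exact Prod.ext hqr (hq.2.trans hr.2.symm)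

/-- Corollary 3.6: for a nonzero algebraic polynomial `p` with complex coefficients and
`ε > 0`, the function `f(x) = p(x) e^{-|x|^{1+ε}}` has linearly independent
time-frequency translates. -/
theorem poly_times_stretched_exp_independent (p : Polynomial ℂ) (hp : p ≠ 0)
    (ε : ℝ) (hε : 0 < ε) :
    GaborIndependent
      (fun x : ℝ => p.eval (x : ℂ) * ↑(Real.exp (-(|x| ^ (1 + ε)))))
      Set.univ := by
  refine gaborIndependent_of_isLittleO ?_ (fun β => ?_)
    (fun b β hb => isLittleO_translate p hε hb)
  · have h : Continuous fun x : ℝ => |x| ^ (1 + ε) :=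
      continuous_abs.rpow_const fun _ => Or.inr (by linarith)
    have h2 : Continuous fun x : ℝ => p.eval (x : ℂ) := p.continuous.comp Complex.continuous_ofReal
    fun_prop
  · have hroot : ∀ᶠ z in Bornology.cobounded ℂ, ¬ p.IsRoot z :=
      (Polynomial.eventually_cofinite_not_isRoot hp).filter_mono
        (Bornology.le_cofinite ℂ)
    filter_upwards [(tendsto_ofReal_sub_cobounded β).eventually hroot] with x hx
    exact mul_ne_zero hx (by exact_mod_cast (Real.exp_pos _).ne')
end

section
/- Let f : ℝ → ℂ be a Lebesgue measurable function, and suppose there exist constants a, c ∈ ℂ and b ∈ ℝ such that f(x) = c e^{a x} for almost every x > b. If it is not the case that f(x) = c e^{a x} for almost every x ∈ ℝ, then the Gabor system 𝒢(f, ℝ²) of all time-frequency translates of f is linearly independent. -/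
/-!
Let `e x = c * exp (a * x)` and `g = f - e`, so that `g` vanishes a.e. on some right half-line but
not a.e. on `ℝ`. Suppose a dependence relation `∑ c_p e_{p.1}(x) f(x - p.2) = 0` holds a.e.

Far to the right every `f(x - p.2)` equals `e(x - p.2)`, and after division by `exp (a * x)` the
relation says that a trigonometric polynomial vanishes a.e. on a half-line. By analyticity
(`trigPoly_eq_zero_of_ae`) it vanishes identically, so the relation holds for `e` everywhere, and
hence for `g` a.e. by subtraction.

Restrict to the terms with nonzero coefficient, let `T` be their largest translation parameter, and
let `δ > 0` separate `T` from all the smaller ones. If `g = 0` a.e. on `(r, ∞)`, then for a.e.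
`x > r + T - δ` only the terms with `p.2 = T` survive, and the relation reads `Q(x) g(x - T) = 0`
with `Q` a trigonometric polynomial that is not identically zero (`trigPoly_coeff_eq_zero`). Thus
`g = 0` a.e. on `(r - δ, ∞)`. Since `δ` does not depend on `r`, iterating yields `g = 0` a.e. on
`ℝ`, a contradiction.
-/

open MeasureTheory

/-- The trigonometric polynomial `x ↦ ∑ p ∈ s, d p * e^{2πi p.1 x}`. It is indexed by
time-frequency points, of which only the frequency `p.1` enters, so frequencies may repeat. -/
noncomputable def trigPoly (s : Finset (ℝ × ℝ)) (d : ℝ × ℝ → ℂ) (x : ℝ) : ℂ :=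
  ∑ p ∈ s, d p * Complex.exp (2 * ↑Real.pi * Complex.I * ↑p.1 * ↑x)

lemma analyticOnNhd_trigPoly (s : Finset (ℝ × ℝ)) (d : ℝ × ℝ → ℂ) :
    AnalyticOnNhd ℝ (trigPoly s d) Set.univ := by
  intro x _
  unfold trigPoly
  refine Finset.analyticAt_fun_sum _ fun p _ => analyticAt_const.mul ?_
  have h1 : AnalyticAt ℝ (fun x : ℝ => 2 * ↑Real.pi * Complex.I * ↑p.1 * (x : ℂ)) x :=
    analyticAt_const.mul (Complex.ofRealCLM.analyticAt x)
  exact (analyticAt_cexp.restrictScalars (𝕜 := ℝ)).comp h1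

lemma trigPoly_ae_ne_zero (s : Finset (ℝ × ℝ)) (d : ℝ × ℝ → ℂ) (x₀ : ℝ)
    (h : trigPoly s d x₀ ≠ 0) : ∀ᵐ x : ℝ, trigPoly s d x ≠ 0 := by
  have h1 := (analyticOnNhd_trigPoly s d).preimage_zero_mem_codiscrete h
  have h2 := ae_restrict_le_codiscreteWithin (μ := (volume : Measure ℝ)) MeasurableSet.univ h1
  rw [Measure.restrict_univ] at h2
  filter_upwards [h2] with x hx using hx

/-- A trigonometric polynomial vanishing a.e. on a half-line is identically zero. -/
lemma trigPoly_eq_zero_of_ae (s : Finset (ℝ × ℝ)) (d : ℝ × ℝ → ℂ) (R : ℝ)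
    (h : ∀ᵐ x : ℝ, R < x → trigPoly s d x = 0) (x : ℝ) : trigPoly s d x = 0 := by
  by_contra hx
  have h1 : ∀ᵐ y : ℝ, y ∉ Set.Ioi R := by
    filter_upwards [h, trigPoly_ae_ne_zero s d x hx] with y hy hy' hR
    exact hy' (hy hR)
  rw [← measure_eq_zero_iff_ae_notMem, Real.volume_Ioi] at h1
  exact ENNReal.top_ne_zero h1

/-- The character `x ↦ e^{2πi ω x}` of `ℝ`, as a monoid homomorphism into `ℂ`. -/
noncomputable def freqChar (ω : ℝ) : Multiplicative ℝ →* ℂ where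
  toFun x := Complex.exp (2 * ↑Real.pi * Complex.I * ↑ω * ↑(Multiplicative.toAdd x))
  map_one' := by simp
  map_mul' x y := by
    rw [← Complex.exp_add]
    congr 1
    push_cast [toAdd_mul]
    ring

lemma freqChar_injective : Function.Injective freqChar := by
  intro ω η h
  have hd : ∀ ω : ℝ, HasDerivAt
      (fun x : ℝ => Complex.exp (2 * ↑Real.pi * Complex.I * ↑ω * ↑x))
      (2 * ↑Real.pi * Complex.I * ↑ω) 0 := by
    intro ω
    have := ((Complex.ofRealCLM.hasDerivAt (x := (0 : ℝ))).const_mul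
      (2 * ↑Real.pi * Complex.I * (ω : ℂ))).cexp
    simpa using this
  have he : (fun x : ℝ => Complex.exp (2 * ↑Real.pi * Complex.I * ↑ω * ↑x)) =
      fun x : ℝ => Complex.exp (2 * ↑Real.pi * Complex.I * ↑η * ↑x) := by
    ext x
    exact DFunLike.congr_fun h (Multiplicative.ofAdd x)
  -- The frequency is read off from the derivative of the character at the origin.
  have h1 := hd ω
  rw [he] at h1
  have h2 := h1.unique (hd η)
  have h3 : (2 * ↑Real.pi * Complex.I : ℂ) ≠ 0 := by
    simp [Real.pi_ne_zero]
  exact_mod_cast mul_left_cancel₀ h3 h2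

/-- Distinct characters are linearly independent (Dedekind), so a trigonometric polynomial with
pairwise distinct frequencies that vanishes identically has zero coefficients. -/
lemma trigPoly_coeff_eq_zero (s : Finset (ℝ × ℝ)) (d : ℝ × ℝ → ℂ)
    (hs : Set.InjOn Prod.fst (s : Set (ℝ × ℝ))) (h : ∀ x, trigPoly s d x = 0) :
    ∀ p ∈ s, d p = 0 := by
  have hli := (linearIndependent_monoidHom (Multiplicative ℝ) ℂ).comp
    (fun p : s => freqChar p.1.1)
    (fun p q hpq => Subtype.ext (hs p.2 q.2 (freqChar_injective hpq)))
  rw [Fintype.linearIndependent_iff] at hli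
  intro p hp
  refine hli (fun p => d p.1) ?_ ⟨p, hp⟩
  ext x
  have := h (Multiplicative.toAdd x)
  rw [trigPoly, ← Finset.sum_coe_sort] at this
  simpa [freqChar] using this

/-- If `g` satisfies a nontrivial dependence relation, then vanishing a.e. to the right of any
point propagates to the left by a step `δ` not depending on that point. -/
lemma exists_step (g : ℝ → ℂ) (s : Finset (ℝ × ℝ)) (k : ℝ × ℝ → ℂ)
    (hs : s.Nonempty) (hk : ∀ p ∈ s, k p ≠ 0)
    (hrel : ∀ᵐ x : ℝ, ∑ p ∈ s,
      k p * Complex.exp (2 * ↑Real.pi * Complex.I * ↑p.1 * ↑x) * g (x - p.2) = 0) :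
    ∃ δ > 0, ∀ r : ℝ, (∀ᵐ x : ℝ, r < x → g x = 0) → ∀ᵐ x : ℝ, r - δ < x → g x = 0 := by
  obtain ⟨q, hq, hmax⟩ := s.exists_max_image Prod.snd hs
  set T := q.2 with hT
  obtain ⟨δ, hδ, hδ0⟩ : ∃ δ : ℝ, (∀ p ∈ s, p.2 < T → p.2 ≤ T - δ) ∧ 0 < δ := by
    have h1 : ∀ᶠ δ : ℝ in nhdsWithin 0 (Set.Ioi 0), ∀ p ∈ s, p.2 < T → p.2 ≤ T - δ := by
      rw [Filter.eventually_all_finset]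
      intro p _
      by_cases hp : p.2 < T
      · filter_upwards [Ioo_mem_nhdsGT (sub_pos.2 hp)] with δ hδ _
        linarith [hδ.2]
      · exact Filter.Eventually.of_forall fun _ h => absurd h hp
    exact (h1.and self_mem_nhdsWithin).exists
  refine ⟨δ, hδ0, fun r hr => ?_⟩
  set A := s.filter (fun p => p.2 = T) with hA
  have hinj : Set.InjOn Prod.fst (A : Set (ℝ × ℝ)) := by
    intro p hp p' hp' h
    have h1 := (Finset.mem_filter.1 (Finset.mem_coe.1 hp)).2
    have h2 := (Finset.mem_filter.1 (Finset.mem_coe.1 hp')).2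
    exact Prod.ext h (h1.trans h2.symm)
  obtain ⟨x₀, hx₀⟩ : ∃ x₀, trigPoly A k x₀ ≠ 0 := by
    by_contra! h
    exact hk q hq (trigPoly_coeff_eq_zero A k hinj h q (Finset.mem_filter.2 ⟨hq, rfl⟩))
  have htr : ∀ᵐ x : ℝ, ∀ p ∈ s, r < x - p.2 → g (x - p.2) = 0 := by
    rw [Filter.eventually_all_finset]
    intro p _
    exact (eventually_sub_right_iff (μ := (volume : Measure ℝ))
      (p := fun x => r < x → g x = 0) p.2).2 hr
  rw [← eventually_sub_right_iff (μ := (volume : Measure ℝ)) T]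
  filter_upwards [hrel, htr, trigPoly_ae_ne_zero A k x₀ hx₀] with x hx hg hQ hxr
  have h1 : trigPoly A k x * g (x - T) = 0 := by
    rw [← hx, trigPoly, Finset.sum_mul, hA, Finset.sum_filter]
    refine Finset.sum_congr rfl fun p hp => ?_
    split_ifs with hpT
    · rw [hpT]
    · have := hδ p hp (lt_of_le_of_ne (hmax p hp) hpT)
      rw [hg p hp (by linarith), mul_zero]
  exact (mul_eq_zero.1 h1).resolve_left hQ

/-- A dependence relation for `f` passes to its exponential tail, where it holds everywhere. -/
lemma tail_relation (f : ℝ → ℂ) (a c : ℂ) (b : ℝ)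
    (htail : ∀ᵐ x : ℝ, b < x → f x = c * Complex.exp (a * ↑x))
    (s : Finset (ℝ × ℝ)) (k : ℝ × ℝ → ℂ)
    (hrel : ∀ᵐ x : ℝ, ∑ p ∈ s,
      k p * Complex.exp (2 * ↑Real.pi * Complex.I * ↑p.1 * ↑x) * f (x - p.2) = 0) (x : ℝ) :
    ∑ p ∈ s, k p * Complex.exp (2 * ↑Real.pi * Complex.I * ↑p.1 * ↑x) *
      (c * Complex.exp (a * ↑(x - p.2))) = 0 := by
  set d : ℝ × ℝ → ℂ := fun p => k p * (c * Complex.exp (-(a * ↑p.2))) with hd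
  have key : ∀ x : ℝ, ∑ p ∈ s, k p * Complex.exp (2 * ↑Real.pi * Complex.I * ↑p.1 * ↑x) *
      (c * Complex.exp (a * ↑(x - p.2))) = trigPoly s d x * Complex.exp (a * ↑x) := by
    intro x
    rw [trigPoly, Finset.sum_mul]
    refine Finset.sum_congr rfl fun p _ => ?_
    have : Complex.exp (a * ↑(x - p.2)) =
        Complex.exp (-(a * ↑p.2)) * Complex.exp (a * ↑x) := by
      rw [← Complex.exp_add]
      congr 1
      push_cast
      ring
    rw [this, hd]
    ring
  obtain ⟨M, hM⟩ : ∃ M : ℝ, ∀ p ∈ s, p.2 ≤ M := by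
    obtain ⟨M, hM⟩ := (s.image Prod.snd).bddAbove
    exact ⟨M, fun p hp => hM (Finset.mem_coe.2 (Finset.mem_image_of_mem _ hp))⟩
  rw [key, trigPoly_eq_zero_of_ae s d (b + M) ?_ x, zero_mul]
  have htr : ∀ᵐ x : ℝ, ∀ p ∈ s, b < x - p.2 →
      f (x - p.2) = c * Complex.exp (a * ↑(x - p.2)) := by
    rw [Filter.eventually_all_finset]
    intro p _
    exact (eventually_sub_right_iff (μ := (volume : Measure ℝ))
      (p := fun x : ℝ => b < x → f x = c * Complex.exp (a * ↑x)) p.2).2 htail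
  filter_upwards [hrel, htr] with y hy hf hyM
  refine (mul_eq_zero.1 ((key y).symm.trans ?_)).resolve_right (Complex.exp_ne_zero _)
  rw [← hy]
  refine Finset.sum_congr rfl fun p hp => ?_
  rw [hf p hp (by linarith [hM p hp])]

/-- Theorem 4.2 (right-tail version): if `f` is measurable and `f(x) = c e^{ax}` for
a.e. `x > b`, but not `f(x) = c e^{ax}` for a.e. `x ∈ ℝ`, then `𝒢(f, ℝ²)` is
linearly independent. -/
theorem exp_tail_right_independent (f : ℝ → ℂ) (hf : Measurable f)
    (a c : ℂ) (b : ℝ)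
    (htail : ∀ᵐ x : ℝ ∂volume, b < x → f x = c * Complex.exp (a * ↑x))
    (hne : ¬ (∀ᵐ x : ℝ ∂volume, f x = c * Complex.exp (a * ↑x))) :
    GaborIndependent f Set.univ := by
  intro s _ k hrel
  by_contra! hcon
  obtain ⟨p₀, hp₀, hkp₀⟩ := hcon
  apply hne
  set g : ℝ → ℂ := fun x => f x - c * Complex.exp (a * ↑x) with hg
  have hgrel : ∀ᵐ x : ℝ, ∑ p ∈ s.filter (fun p => k p ≠ 0),
      k p * Complex.exp (2 * ↑Real.pi * Complex.I * ↑p.1 * ↑x) * g (x - p.2) = 0 := by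
    filter_upwards [hrel] with x hx
    rw [Finset.sum_filter_of_ne fun p _ h => left_ne_zero_of_mul (left_ne_zero_of_mul h)]
    simp only [hg, mul_sub, Finset.sum_sub_distrib]
    rw [hx, tail_relation f a c b htail s k hrel x, sub_zero]
  obtain ⟨δ, hδ, hstep⟩ := exists_step g _ k ⟨p₀, Finset.mem_filter.2 ⟨hp₀, hkp₀⟩⟩
    (fun p hp => (Finset.mem_filter.1 hp).2) hgrel
  have hall : ∀ n : ℕ, ∀ᵐ x : ℝ, b - n * δ < x → g x = 0 := by
    intro n
    induction n with
    | zero =>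
      filter_upwards [htail] with x hx hbx
      simp [hg, hx (by simpa using hbx)]
    | succ n ih =>
      have := hstep _ ih
      filter_upwards [this] with x hx hbx
      refine hx ?_
      push_cast at hbx
      linarith
  filter_upwards [ae_all_iff.2 hall] with x hx
  obtain ⟨n, hn⟩ := exists_nat_gt ((b - x) / δ)
  rw [div_lt_iff₀ hδ] at hn
  exact sub_eq_zero.1 (hx n (by linarith))
end

section
/- Let f : ℝ → ℂ be a Lebesgue measurable function, and suppose there exist constants a, c ∈ ℂ and b ∈ ℝ such that f(x) = c e^{a x} for almost every x < b. If it is not the case that f(x) = c e^{a x} for almost every x ∈ ℝ, then the Gabor system 𝒢(f, ℝ²) of all time-frequency translates of f is linearly independent. -/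
/-!
The exponential tail is subtracted off: put `g x = f x - c e^{ax}`, which vanishes a.e. on
`(-∞, b)` but not a.e. on `ℝ`. In a vanishing combination of time-frequency translates of `f`, the
corresponding combination of translates of `c e^{ax}` is a real-analytic function which vanishes
on a half-line, hence everywhere (`ae_ne_zero_or_eq_zero`). So `g` satisfies the same dependence
relation as `f`.

Among the terms with nonzero coefficient take those with the smallest translation `b₁`; the other
translations are at least `b₁ + δ` with `δ > 0`. If `g` vanishes a.e. on `(-∞, t)`, then on
`(-∞, t + δ + b₁)` only the terms with translation `b₁` survive, so `P x * g (x - b₁) = 0` there,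
where `P` is a trigonometric polynomial with nonzero coefficients. By `trig_coeff_eq_zero` and
analyticity `P` is nonzero a.e., so `g` vanishes a.e. on `(-∞, t + δ)`. Iterating, `g` vanishes a.e.
on `ℝ`, a contradiction.
-/

open MeasureTheory

/-- A real-analytic function on `ℝ` is either a.e. nonzero or identically zero. -/
lemma ae_ne_zero_or_eq_zero (h : ℝ → ℂ) (hh : AnalyticOnNhd ℝ h Set.univ) :
    (∀ᵐ x : ℝ, h x ≠ 0) ∨ ∀ x, h x = 0 := by
  by_cases h0 : ∃ x, h x ≠ 0
  · left
    obtain ⟨x, hx⟩ := h0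
    have h1 := hh.preimage_zero_mem_codiscrete hx
    have h2 : (h ⁻¹' {0}ᶜ) ∈ ae (volume.restrict (Set.univ : Set ℝ)) :=
      ae_restrict_le_codiscreteWithin MeasurableSet.univ h1
    rw [Measure.restrict_univ] at h2
    filter_upwards [h2] with y hy
    simpa using hy
  · right
    push Not at h0
    exact h0

/-- Dedekind's independence of characters, applied to `x ↦ e^{2πiξx}`. The exponentials are indexed
by `s` through a frequency map `u` which is injective on `s`. -/
lemma trig_coeff_eq_zero {ι : Type*} (s : Finset ι) (u : ι → ℝ) (hu : Set.InjOn u s) (d : ι → ℂ)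
    (h : ∀ x : ℝ, ∑ p ∈ s, d p * Complex.exp (2 * ↑Real.pi * Complex.I * ↑(u p) * ↑x) = 0) :
    ∀ p ∈ s, d p = 0 := by
  classical
  let χ : s → (Multiplicative ℝ →* ℂ) := fun p =>
    { toFun := fun x => Complex.exp (2 * ↑Real.pi * Complex.I * ↑(u p) * ↑(x.toAdd))
      map_one' := by simp
      map_mul' := by
        intro x y
        rw [← Complex.exp_add, toAdd_mul]
        push_cast
        ring_nf }
  have hχ : Function.Injective χ := by
    intro p q hpq
    by_contra hne
    have hne' : u p - u q ≠ 0 := fun h0 =>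
      hne (Subtype.ext (hu p.2 q.2 (sub_eq_zero.1 h0)))
    -- the quotient of the two characters takes the value `e^{πi} = -1` at this point
    have h1 := DFunLike.congr_fun hpq (Multiplicative.ofAdd (1 / (2 * (u p - u q))))
    change Complex.exp (2 * ↑Real.pi * Complex.I * ↑(u p) * ↑(1 / (2 * (u p - u q)))) =
      Complex.exp (2 * ↑Real.pi * Complex.I * ↑(u q) * ↑(1 / (2 * (u p - u q)))) at h1
    have h2 : (2 * ↑Real.pi * Complex.I * ↑(u p) * ↑(1 / (2 * (u p - u q))) : ℂ) =
        2 * ↑Real.pi * Complex.I * ↑(u q) * ↑(1 / (2 * (u p - u q))) + Real.pi * Complex.I := by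
      have hc : ((u p : ℂ) - u q) ≠ 0 := by exact_mod_cast hne'
      push_cast
      field_simp
      ring
    rw [h2, Complex.exp_add, Complex.exp_pi_mul_I] at h1
    have h3 := Complex.exp_ne_zero (2 * ↑Real.pi * Complex.I * ↑(u q) * ↑(1 / (2 * (u p - u q))))
    apply h3
    linear_combination (-1 / 2 : ℂ) * h1
  have hli := (linearIndependent_monoidHom (Multiplicative ℝ) ℂ).comp χ hχ
  rw [Fintype.linearIndependent_iff] at hli
  intro p hp
  refine hli (fun q => d q) ?_ ⟨p, hp⟩
  ext x
  have h1 := h x.toAdd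
  rw [← Finset.sum_coe_sort] at h1
  simpa [Finset.sum_apply, χ] using h1

lemma analytic_trig {ι : Type*} (s : Finset ι) (u : ι → ℝ) (d : ι → ℂ) :
    AnalyticOnNhd ℝ
      (fun x : ℝ => ∑ p ∈ s, d p * Complex.exp (2 * ↑Real.pi * Complex.I * ↑(u p) * ↑x))
      Set.univ := by
  have hx : AnalyticOnNhd ℝ (fun x : ℝ => (x : ℂ)) Set.univ :=
    fun x _ => Complex.ofRealCLM.analyticAt x
  refine Finset.analyticOnNhd_fun_sum s fun p _ => ?_
  refine analyticOnNhd_const.mul fun x hx' => ?_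
  exact (analyticAt_cexp.restrictScalars (𝕜 := ℝ)).comp ((analyticOnNhd_const.mul hx) x hx')

/-- An a.e. property of `g` on a half-line transfers to the translate of `g`. -/
lemma ae_shift {P : ℝ → Prop} (h : ∀ᵐ x : ℝ, P x) (r : ℝ) : ∀ᵐ x : ℝ, P (x - r) :=
  (measurePreserving_sub_right volume r).quasiMeasurePreserving.ae h

/-- A function vanishing a.e. on a half-line `(-∞, b)` but not a.e. on `ℝ` has linearly independent
time-frequency translates. -/
lemma independent_of_halfline (g : ℝ → ℂ) (b : ℝ)
    (htail : ∀ᵐ x : ℝ, x < b → g x = 0) (hne : ¬ ∀ᵐ x : ℝ, g x = 0)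
    (s : Finset (ℝ × ℝ)) (c : ℝ × ℝ → ℂ)
    (hsum : ∀ᵐ x : ℝ,
      ∑ p ∈ s, c p * Complex.exp (2 * ↑Real.pi * Complex.I * ↑p.1 * ↑x) * g (x - p.2) = 0) :
    ∀ p ∈ s, c p = 0 := by
  classical
  by_contra! hcon
  obtain ⟨q, hq, hcq⟩ := hcon
  obtain ⟨p₀, hp₀, hmin⟩ := (s.filter fun p => c p ≠ 0).exists_min_image Prod.snd
    ⟨q, Finset.mem_filter.2 ⟨hq, hcq⟩⟩
  rw [Finset.mem_filter] at hp₀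
  obtain ⟨δ, hδ, hδ0⟩ : ∃ δ : ℝ, (∀ p ∈ s, c p ≠ 0 → p.2 ≠ p₀.2 → δ ≤ p.2 - p₀.2) ∧ 0 < δ := by
    have h1 : ∀ᶠ δ in nhdsWithin (0 : ℝ) (Set.Ioi 0),
        ∀ p ∈ s, c p ≠ 0 → p.2 ≠ p₀.2 → δ ≤ p.2 - p₀.2 := by
      rw [Filter.eventually_all_finset]
      intro p hp
      by_cases hc : c p ≠ 0 ∧ p.2 ≠ p₀.2
      · have hlt : 0 < p.2 - p₀.2 :=
          sub_pos.2 (lt_of_le_of_ne (hmin p (Finset.mem_filter.2 ⟨hp, hc.1⟩)) hc.2.symm)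
        filter_upwards [Ioo_mem_nhdsGT hlt] with δ hδ _ _ using hδ.2.le
      · exact Filter.Eventually.of_forall fun δ h1 h2 => absurd ⟨h1, h2⟩ hc
    exact (h1.and self_mem_nhdsWithin).exists
  have hP : ∀ᵐ x : ℝ, ∑ p ∈ s.filter (fun p => p.2 = p₀.2),
      c p * Complex.exp (2 * ↑Real.pi * Complex.I * ↑p.1 * ↑x) ≠ 0 := by
    refine (ae_ne_zero_or_eq_zero _ (analytic_trig _ Prod.fst c)).resolve_right fun h0 => ?_
    refine hp₀.2 (trig_coeff_eq_zero _ Prod.fst ?_ c h0 p₀ (Finset.mem_filter.2 ⟨hp₀.1, rfl⟩))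
    intro p hp r hr hpr
    simp only [Finset.coe_filter, Set.mem_ofPred_eq] at hp hr
    exact Prod.ext hpr (hp.2.trans hr.2.symm)
  have step : ∀ t : ℝ, (∀ᵐ x : ℝ, x < t → g x = 0) → ∀ᵐ x : ℝ, x < t + δ → g x = 0 := by
    intro t ht
    have hall : ∀ᵐ x : ℝ, ∀ p ∈ s, x - p.2 < t → g (x - p.2) = 0 :=
      (Filter.eventually_all_finset s).2 fun p _ => ae_shift ht p.2
    have hshift : ∀ᵐ x : ℝ, x - p₀.2 < t + δ → g (x - p₀.2) = 0 := by
      filter_upwards [hall, hP, hsum] with x h1 h2 h3 hx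
      have h4 : (∑ p ∈ s.filter (fun p => p.2 = p₀.2),
          c p * Complex.exp (2 * ↑Real.pi * Complex.I * ↑p.1 * ↑x)) * g (x - p₀.2) = 0 := by
        rw [← h3, Finset.sum_mul, Finset.sum_filter]
        refine Finset.sum_congr rfl fun p hp => ?_
        split_ifs with h5
        · rw [h5]
        · by_cases hc : c p = 0
          · simp [hc]
          · have := hδ p hp hc h5
            rw [h1 p hp (by linarith), mul_zero]
      exact (mul_eq_zero.1 h4).resolve_left h2
    have := ae_shift hshift (-p₀.2)
    simpa using this
  have hn : ∀ n : ℕ, ∀ᵐ x : ℝ, x < b + n * δ → g x = 0 := by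
    intro n
    induction n with
    | zero => simpa using htail
    | succ n ih =>
      have := step _ ih
      push_cast
      filter_upwards [this] with x hx hlt
      exact hx (by linarith)
  apply hne
  filter_upwards [ae_all_iff.2 hn] with x hx
  obtain ⟨n, hn⟩ := exists_nat_gt ((x - b) / δ)
  rw [div_lt_iff₀ hδ0] at hn
  exact hx n (by linarith)

/-- Theorem 4.2 (left-tail version): if `f` is measurable and `f(x) = c e^{ax}` for
a.e. `x < b`, but not `f(x) = c e^{ax}` for a.e. `x ∈ ℝ`, then `𝒢(f, ℝ²)` is
linearly independent. -/
theorem exp_tail_left_independent (f : ℝ → ℂ) (hf : Measurable f)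
    (a c : ℂ) (b : ℝ)
    (htail : ∀ᵐ x : ℝ ∂volume, x < b → f x = c * Complex.exp (a * ↑x))
    (hne : ¬ (∀ᵐ x : ℝ ∂volume, f x = c * Complex.exp (a * ↑x))) :
    GaborIndependent f Set.univ := by
  intro s _ d hsum
  have hexp : ∀ x : ℝ, ∑ p ∈ s, d p * Complex.exp (2 * ↑Real.pi * Complex.I * ↑p.1 * ↑x) *
      (c * Complex.exp (a * ↑(x - p.2))) = 0 := by
    -- up to the factor `e^{ax}`, the sum is a trigonometric polynomial
    have hfac : ∀ x : ℝ, ∑ p ∈ s, d p * Complex.exp (2 * ↑Real.pi * Complex.I * ↑p.1 * ↑x) *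
        (c * Complex.exp (a * ↑(x - p.2))) = Complex.exp (a * x) *
        ∑ p ∈ s, (d p * c * Complex.exp (-a * p.2)) *
          Complex.exp (2 * ↑Real.pi * Complex.I * ↑p.1 * ↑x) := by
      intro x
      rw [Finset.mul_sum]
      refine Finset.sum_congr rfl fun p _ => ?_
      have h1 : a * ((x - p.2 : ℝ) : ℂ) = a * x + -a * p.2 := by push_cast; ring
      rw [h1, Complex.exp_add]
      ring
    rcases ae_ne_zero_or_eq_zero _
      (analytic_trig s Prod.fst fun p => d p * c * Complex.exp (-a * p.2)) with h | h
    · exfalso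
      obtain ⟨m, hm⟩ : ∃ m : ℝ, ∀ p ∈ s, m ≤ p.2 :=
        ((Filter.eventually_all_finset s).2
          fun p _ => Filter.eventually_le_atBot p.2 : ∀ᶠ m : ℝ in Filter.atBot, _).exists
      have hall : ∀ᵐ x : ℝ, ∀ p ∈ s, x - p.2 < b → f (x - p.2) = c * Complex.exp (a * ↑(x - p.2)) :=
        (Filter.eventually_all_finset s).2 fun p _ => ae_shift htail p.2
      have hno : ∀ᵐ x : ℝ, ¬ x < b + m := by
        filter_upwards [h, hall, hsum] with x h1 h2 h3 hx
        apply h1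
        have h4 := hfac x
        rw [Finset.sum_congr rfl fun p hp => by
          rw [← h2 p hp (by linarith [hm p hp])], h3] at h4
        exact (mul_eq_zero.1 h4.symm).resolve_left (Complex.exp_ne_zero _)
      have h0 : volume (Set.Iio (b + m)) = 0 := by
        simpa [ae_iff, Set.Iio] using hno
      simp [Real.volume_Iio] at h0
    · intro x
      rw [hfac x, h x, mul_zero]
  refine independent_of_halfline (fun x => f x - c * Complex.exp (a * ↑x)) b ?_ ?_ s d ?_
  · filter_upwards [htail] with x hx hlt
    rw [hx hlt, sub_self]
  · simpa only [sub_eq_zero] using hne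
  · filter_upwards [hsum] with x hx
    simp only [mul_sub, Finset.sum_sub_distrib]
    rw [hx, zero_sub, neg_eq_zero]
    simpa only [mul_sub, Complex.ofReal_sub] using hexp x
end
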